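/- For all integers Z ≥ 1, F ≥ Z + 1, every integer ℓ ≥ 1, and every integer x with 0 ≤ x ≤ ⌈(Z + 1)/(F − Z)⌉ − 1, one has s(F, ℓ·C(F, Z) − x, Z) = ℓ·C(F, Z+1) = ℓ·C(F, Z)·(F − Z)/(Z + 1). -/

import Mathlib

open scoped Classical

/-- A placement delivery array with parameters `(F, K, Z)` over alphabet `S`:
an `F × K` array of cells that are either empty (`none`) or an element of `S`,
such that each column has exactly `Z` empty cells, no element occurs twice in a
row or in a column, and two equal entries in positions `(j₁,k₁)`, `(j₂,k₂)`
force the cells `(j₁,k₂)` and `(j₂,k₁)` to be empty. -/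
def IsPDA {S : Type} (F K Z : ℕ) (A : Fin F → Fin K → Option S) : Prop :=
  (∀ k : Fin K, (Finset.univ.filter fun j : Fin F => A j k = none).card = Z) ∧
  (∀ (j : Fin F) (k₁ k₂ : Fin K) (t : S), A j k₁ = some t → A j k₂ = some t → k₁ = k₂) ∧
  (∀ (j₁ j₂ : Fin F) (k : Fin K) (t : S), A j₁ k = some t → A j₂ k = some t → j₁ = j₂) ∧
  (∀ (j₁ j₂ : Fin F) (k₁ k₂ : Fin K) (t : S), j₁ ≠ j₂ → k₁ ≠ k₂ →
      A j₁ k₁ = some t → A j₂ k₂ = some t → A j₁ k₂ = none ∧ A j₂ k₁ = none)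

/-- `sPDA F K Z` is the minimum size of an alphabet `S` for which an `S`-PDA with
parameters `(F, K, Z)` exists. -/
noncomputable def sPDA (F K Z : ℕ) : ℕ :=
  sInf {n : ℕ | ∃ A : Fin F → Fin K → Option (Fin n), IsPDA F K Z A}


theorem pda_lower {F K Z n : ℕ} (A : Fin F → Fin K → Option (Fin n)) (h : IsPDA F K Z A) :
    K * (F - Z) ≤ n * (Z + 1) := by
  obtain ⟨h1, h2, h3, h4⟩ := h
  have hT : ∀ t : Fin n,
      (Finset.univ.filter fun p : Fin F × Fin K => A p.1 p.2 = some t).card ≤ Z + 1 := by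
    intro t
    by_cases hne : ∃ p : Fin F × Fin K, A p.1 p.2 = some t
    · obtain ⟨⟨j0, k0⟩, h0⟩ := hne
      simp only at h0
      rw [← h1 k0]
      refine le_trans ?_ (Finset.card_insert_le j0 _)
      refine Finset.card_le_card_of_injOn Prod.fst ?_ ?_
      · rintro ⟨j, k⟩ hp
        simp only [Finset.coe_filter, Finset.mem_univ, true_and, Set.mem_setOf_eq] at hp
        simp only [Finset.coe_insert, Finset.coe_filter, Finset.mem_univ, true_and,
          Set.mem_insert_iff, Set.mem_setOf_eq]
        by_cases hj : j = j0
        · exact Or.inl hj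
        · right
          by_cases hk : k = k0
          · subst hk
            exact absurd (h3 _ _ _ _ hp h0) hj
          · exact (h4 _ _ _ _ _ hj hk hp h0).1
      · rintro ⟨j, k⟩ hp ⟨j', k'⟩ hp' hjj
        simp only [Finset.coe_filter, Finset.mem_univ, true_and, Set.mem_setOf_eq] at hp hp' hjj
        subst hjj
        rw [h2 _ _ _ _ hp hp']
    · push Not at hne
      rw [Finset.filter_false_of_mem (fun p _ => hne p)]
      simp
  have hC : ∀ k : Fin K, (Finset.univ.filter fun j : Fin F => A j k ≠ none).card = F - Z := by
    intro k
    have := Finset.card_filter_add_card_filter_not (s := (Finset.univ : Finset (Fin F)))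
      (fun j => A j k = none)
    rw [h1 k, Finset.card_univ, Fintype.card_fin] at this
    simp only [ne_eq]
    omega
  calc K * (F - Z) = ∑ k : Fin K, (Finset.univ.filter fun j : Fin F => A j k ≠ none).card := by
        simp [hC]
    _ = ∑ k : Fin K, ∑ j : Fin F, ∑ t : Fin n, if A j k = some t then 1 else 0 := by
        refine Finset.sum_congr rfl fun k _ => ?_
        rw [Finset.card_filter]
        refine Finset.sum_congr rfl fun j _ => ?_
        cases hA : A j k <;> simp
    _ = ∑ t : Fin n, (Finset.univ.filter fun p : Fin F × Fin K => A p.1 p.2 = some t).card := by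
        simp_rw [Finset.card_filter, Fintype.sum_prod_type]
        rw [Finset.sum_comm]
        rw [Finset.sum_comm (s := (Finset.univ : Finset (Fin n)))]
        refine Finset.sum_congr rfl fun k _ => ?_
        rw [Finset.sum_comm]
    _ ≤ ∑ t : Fin n, (Z + 1) := Finset.sum_le_sum fun t _ => hT t
    _ = n * (Z + 1) := by simp

theorem pda_upper (F Z ℓ K : ℕ) (hK : K ≤ ℓ * F.choose Z) :
    ∃ A : Fin F → Fin K → Option (Fin (ℓ * F.choose (Z + 1))), IsPDA F K Z A := by
  have c : ∀ m, Fintype.card (Fin ℓ × {s : Finset (Fin F) // s.card = m}) = ℓ * F.choose m := by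
    intro m
    simp
  let e := (Fintype.equivFinOfCardEq (c Z)).symm
  let e' := Fintype.equivFinOfCardEq (c (Z + 1))
  let col : Fin K → Fin ℓ × {s : Finset (Fin F) // s.card = Z} := fun k => e (Fin.castLE hK k)
  have hcol : Function.Injective col := e.injective.comp (Fin.castLE_injective hK)
  let A : Fin F → Fin K → Option (Fin (ℓ * F.choose (Z + 1))) := fun j k =>
    if h : j ∈ (col k).2.1 then none
    else some (e' ((col k).1, ⟨insert j (col k).2.1, by
      rw [Finset.card_insert_of_notMem h, (col k).2.2]⟩))
  have hn : ∀ j k, A j k = none ↔ j ∈ (col k).2.1 := by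
    intro j k
    by_cases h : j ∈ (col k).2.1 <;> simp [A, h]
  have hs : ∀ j k t, A j k = some t → j ∉ (col k).2.1 ∧ (e'.symm t).1 = (col k).1 ∧
      (e'.symm t).2.1 = insert j (col k).2.1 := by
    intro j k t ht
    by_cases h : j ∈ (col k).2.1
    · simp [A, h] at ht
    · simp only [A, h, dite_false, Option.some.injEq] at ht
      subst ht
      simp [h]
  refine ⟨A, ?_, ?_, ?_, ?_⟩
  · intro k
    simp only [hn]
    refine Eq.trans ?_ (col k).2.2
    congr 1
    ext j
    simp
  · intro j k₁ k₂ t a b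
    obtain ⟨a1, a2, a3⟩ := hs _ _ _ a
    obtain ⟨b1, b2, b3⟩ := hs _ _ _ b
    apply hcol
    refine Prod.ext (a2.symm.trans b2) (Subtype.ext ?_)
    rw [← Finset.erase_insert a1, ← a3, b3, Finset.erase_insert b1]
  · intro j₁ j₂ k t a b
    obtain ⟨a1, a2, a3⟩ := hs _ _ _ a
    obtain ⟨b1, b2, b3⟩ := hs _ _ _ b
    have : j₁ ∈ insert j₂ (col k).2.1 := by
      rw [← b3, a3]; exact Finset.mem_insert_self _ _
    exact (Finset.mem_insert.1 this).resolve_right a1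
  · intro j₁ j₂ k₁ k₂ t hj hk a b
    obtain ⟨a1, a2, a3⟩ := hs _ _ _ a
    obtain ⟨b1, b2, b3⟩ := hs _ _ _ b
    have h1 : j₁ ∈ insert j₂ (col k₂).2.1 := by
      rw [← b3, a3]; exact Finset.mem_insert_self _ _
    have h2 : j₂ ∈ insert j₁ (col k₁).2.1 := by
      rw [← a3, b3]; exact Finset.mem_insert_self _ _
    rw [hn, hn]
    exact ⟨(Finset.mem_insert.1 h1).resolve_left hj,
      (Finset.mem_insert.1 h2).resolve_left (Ne.symm hj)⟩

theorem stmt_13 (F Z ℓ x : ℕ) (hZ : 1 ≤ Z) (hF : Z + 1 ≤ F) (hℓ : 1 ≤ ℓ)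
    (hx : x ≤ ⌈((Z : ℚ) + 1) / ((F - Z : ℕ) : ℚ)⌉₊ - 1) :
    sPDA F (ℓ * F.choose Z - x) Z = ℓ * F.choose (Z + 1) ∧
    ℓ * F.choose (Z + 1) = ℓ * F.choose Z * (F - Z) / (Z + 1) := by
  have key : ℓ * F.choose Z * (F - Z) = ℓ * F.choose (Z + 1) * (Z + 1) := by
    rw [mul_assoc, mul_assoc, Nat.choose_succ_right_eq]
  have hd : 0 < F - Z := by omega
  have hdq : (0 : ℚ) < ((F - Z : ℕ) : ℚ) := by exact_mod_cast hd
  have hxlt : x * (F - Z) < Z + 1 := by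
    have hpos : 0 < ⌈((Z : ℚ) + 1) / ((F - Z : ℕ) : ℚ)⌉₊ := Nat.ceil_pos.2 (by positivity)
    have h1 : x < ⌈((Z : ℚ) + 1) / ((F - Z : ℕ) : ℚ)⌉₊ := by omega
    have h2 := (lt_div_iff₀ hdq).1 (Nat.lt_ceil.1 h1)
    exact_mod_cast h2
  refine ⟨?_, ?_⟩
  · apply le_antisymm
    · exact Nat.sInf_le (pda_upper F Z ℓ _ (Nat.sub_le _ _))
    · refine le_csInf ⟨_, pda_upper F Z ℓ _ (Nat.sub_le _ _)⟩ ?_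
      rintro n ⟨A, hA⟩
      have h := pda_lower A hA
      rw [Nat.sub_mul, key] at h
      have h3 : ℓ * F.choose (Z + 1) * (Z + 1) < (n + 1) * (Z + 1) := by
        rw [Nat.add_mul n 1]; omega
      exact Nat.lt_succ_iff.1 (Nat.lt_of_mul_lt_mul_right h3)
  · rw [key, Nat.mul_div_cancel _ (Nat.succ_pos Z)]
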